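/- If the sequence p̄ = (p(1), p(2), …), with 0 ≤ p(i) ≤ 1, contains only finitely many non-zero terms, then for every first-order sentence ψ of the language L_≤^c the limit of the probability that ψ holds in C(n,p̄) exists as n → ∞ and equals 0 or 1. -/

import Mathlib

open FirstOrder Filter

namespace RandomGraph

/-- The set of potential edges of a graph on `Fin n` (pairs `(v,w)` with `v < w`).
Vertex `v : Fin n` represents the number `v + 1` of the interval `[n] = {1, …, n}`. -/
abbrev EdgeIdx (n : ℕ) := {e : Fin n × Fin n // e.1 < e.2}

/-- An outcome of the random graph on `[n]`: a choice of which potential edges are present. -/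
abbrev Sample (n : ℕ) := EdgeIdx n → Bool

/-- Adjacency of two vertices (described by their values in `Fin n`) in the outcome `ω`. -/
def adjVal {n : ℕ} (ω : Sample n) (a b : ℕ) : Prop :=
  ∃ e : EdgeIdx n, ω e = true ∧
    ((e.1.1.val = a ∧ e.1.2.val = b) ∨ (e.1.1.val = b ∧ e.1.2.val = a))

/-- Adjacency of two vertices in the outcome `ω`. -/
def sampleAdj {n : ℕ} (ω : Sample n) (v w : Fin n) : Prop := adjVal ω v.val w.val

/-- The probability of the outcome `ω` in the model `G(n, p̄)`: each pair of distinct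
vertices at distance `d` is an edge with probability `p d`, independently.  (The value `p 0` is
never used, since distinct vertices are at distance at least 1.) -/
noncomputable def sampleWeight (p : ℕ → ℝ) {n : ℕ} (ω : Sample n) : ℝ :=
  ∏ e : EdgeIdx n,
    (if ω e then p (e.1.2.val - e.1.1.val) else 1 - p (e.1.2.val - e.1.1.val))

/-- The probability of the outcome `ω` in the circular model `C(n, p̄)`: vertices `v, w` are
adjacent with probability `p (min |v-w| (n - |v-w|))`, independently. -/
noncomputable def cWeight (p : ℕ → ℝ) {n : ℕ} (ω : Sample n) : ℝ :=
  ∏ e : EdgeIdx n,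
    (if ω e then p (min (e.1.2.val - e.1.1.val) (n - (e.1.2.val - e.1.1.val)))
      else 1 - p (min (e.1.2.val - e.1.1.val) (n - (e.1.2.val - e.1.1.val))))

open scoped Classical in
/-- The probability of the event `P` in the random graph `G(n, p̄)`. -/
noncomputable def Pr (p : ℕ → ℝ) (n : ℕ) (P : Sample n → Prop) : ℝ :=
  ∑ ω : Sample n, if P ω then sampleWeight p ω else 0

open scoped Classical in
/-- The probability of the event `P` in the circular random graph `C(n, p̄)`. -/
noncomputable def cPr (p : ℕ → ℝ) (n : ℕ) (P : Sample n → Prop) : ℝ :=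
  ∑ ω : Sample n, if P ω then cWeight p ω else 0

/-! ### The language `L` of graphs (also used as the language `L^c`) -/

/-- An outcome `ω` of the random graph, viewed as a structure of `FirstOrder.Language.graph`,
the language with a single binary adjacency predicate. -/
def graphStructure {n : ℕ} (ω : Sample n) : Language.graph.Structure (Fin n) where
  RelMap | .adj => fun x => sampleAdj ω (x 0) (x 1)

/-- Satisfaction of a sentence of the language `L` in the outcome `ω`. -/
def SatL {n : ℕ} (ω : Sample n) (ψ : Language.graph.Sentence) : Prop :=
  @Language.Sentence.Realize _ _ (graphStructure ω) ψ

/-- `Prob(n, p̄; ψ)` for a sentence `ψ` of the language `L`. -/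
noncomputable def ProbL (p : ℕ → ℝ) (n : ℕ) (ψ : Language.graph.Sentence) : ℝ :=
  Pr p n fun ω => SatL ω ψ

/-- The probability that `C(n, p̄)` satisfies a sentence `ψ` of the language `L^c = L`. -/
noncomputable def cProbL (p : ℕ → ℝ) (n : ℕ) (ψ : Language.graph.Sentence) : ℝ :=
  cPr p n fun ω => SatL ω ψ

/-! ### The language `L₊` -/

/-- The constants of the language `L₊`: the first element `1` and the last element `n`. -/
inductive plusFunc : ℕ → Type
  | one : plusFunc 0
  | last : plusFunc 0

/-- The relations of `L₊`: adjacency and successor. -/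
inductive plusRel : ℕ → Type
  | adj : plusRel 2
  | succ : plusRel 2

/-- The language `L₊` with adjacency, successor (`x = y + 1`), and constants `1` and `n`. -/
def Lplus : Language := ⟨plusFunc, plusRel⟩

/-- An outcome `ω` of the random graph on `[m+1]`, as an `L₊`-structure. -/
def plusStructure {m : ℕ} (ω : Sample (m + 1)) : Lplus.Structure (Fin (m + 1)) where
  funMap | .one => fun _ => 0 | .last => fun _ => Fin.last m
  RelMap
    | .adj => fun x => sampleAdj ω (x 0) (x 1)
    | .succ => fun x => (x 0).val = (x 1).val + 1

/-- `Prob(n, p̄; ψ)` for a sentence `ψ` of `L₊` (set to `0` in the irrelevant case `n = 0`,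
where the constants cannot be interpreted). -/
noncomputable def ProbPlus (p : ℕ → ℝ) : ℕ → Lplus.Sentence → ℝ
  | 0, _ => 0
  | (m + 1), ψ => Pr p (m + 1) fun ω => @Language.Sentence.Realize _ _ (plusStructure ω) ψ

/-! ### The language `L≤` -/

/-- The relations of `L≤`: adjacency and linear order. -/
inductive leRel : ℕ → Type
  | adj : leRel 2
  | le : leRel 2

/-- The language `L≤` with adjacency and a linear order. -/
def Lle : Language := ⟨fun _ => Empty, leRel⟩

/-- An outcome `ω` of the random graph on `[n]`, as an `L≤`-structure. -/
def leStructure {n : ℕ} (ω : Sample n) : Lle.Structure (Fin n) where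
  funMap := fun f _ => Empty.elim f
  RelMap
    | .adj => fun x => sampleAdj ω (x 0) (x 1)
    | .le => fun x => x 0 ≤ x 1

/-- Satisfaction of a sentence of `L≤` in the outcome `ω`. -/
def SatLe {n : ℕ} (ω : Sample n) (ψ : Lle.Sentence) : Prop :=
  @Language.Sentence.Realize _ _ (leStructure ω) ψ

/-- `Prob(n, p̄; ψ)` for a sentence `ψ` of `L≤`. -/
noncomputable def ProbLe (p : ℕ → ℝ) (n : ℕ) (ψ : Lle.Sentence) : ℝ :=
  Pr p n fun ω => SatLe ω ψ

/-! ### The circular languages `L₊^c` and `L≤^c` -/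

/-- The relations of `L₊^c`: adjacency and cyclic successor. -/
inductive plusCRel : ℕ → Type
  | adj : plusCRel 2
  | succ : plusCRel 2

/-- The language `L₊^c`, with adjacency and cyclic successor (`x = y + 1 (mod n)`). -/
def LplusC : Language := ⟨fun _ => Empty, plusCRel⟩

/-- An outcome `ω` of the circular random graph on `[n]`, as an `L₊^c`-structure. -/
def plusCStructure {n : ℕ} (ω : Sample n) : LplusC.Structure (Fin n) where
  funMap := fun f _ => Empty.elim f
  RelMap
    | .adj => fun x => sampleAdj ω (x 0) (x 1)
    | .succ => fun x => (x 0).val = ((x 1).val + 1) % n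

/-- The probability that `C(n, p̄)` satisfies a sentence `ψ` of the language `L₊^c`. -/
noncomputable def cProbPlus (p : ℕ → ℝ) (n : ℕ) (ψ : LplusC.Sentence) : ℝ :=
  cPr p n fun ω => @Language.Sentence.Realize _ _ (plusCStructure ω) ψ

/-- The relations of `L≤^c`: adjacency and the ternary clockwise-order predicate. -/
inductive cycRel : ℕ → Type
  | adj : cycRel 2
  | btw : cycRel 3

/-- The language `L≤^c`, with adjacency and the ternary clockwise-order predicate `C`. -/
def Lcyc : Language := ⟨fun _ => Empty, cycRel⟩

/-- `C(a, b, c)`: `a ≤ b ≤ c` holds after some cyclic permutation of `(a, b, c)`. -/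
def cyclicBtw {n : ℕ} (a b c : Fin n) : Prop :=
  (a ≤ b ∧ b ≤ c) ∨ (b ≤ c ∧ c ≤ a) ∨ (c ≤ a ∧ a ≤ b)

/-- An outcome `ω` of the circular random graph on `[n]`, as an `L≤^c`-structure. -/
def cycStructure {n : ℕ} (ω : Sample n) : Lcyc.Structure (Fin n) where
  funMap := fun f _ => Empty.elim f
  RelMap
    | .adj => fun x => sampleAdj ω (x 0) (x 1)
    | .btw => fun x => cyclicBtw (x 0) (x 1) (x 2)

/-- Satisfaction of a sentence of `L≤^c` in the outcome `ω`. -/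
def SatCyc {n : ℕ} (ω : Sample n) (ψ : Lcyc.Sentence) : Prop :=
  @Language.Sentence.Realize _ _ (cycStructure ω) ψ

/-- The probability that `C(n, p̄)` satisfies a sentence `ψ` of the language `L≤^c`. -/
noncomputable def cProbCyc (p : ℕ → ℝ) (n : ℕ) (ψ : Lcyc.Sentence) : ℝ :=
  cPr p n fun ω => SatCyc ω ψ

/-!
Let `p i = 0` for `i > N`. Almost surely every edge of `C(n, p̄)` joins vertices at circular
distance at most `N`, so the graph is coded by a circular word over the finite alphabet `Fin N →
Bool`, whose letter at `v` lists the edges from `v` to the next `N` vertices clockwise. An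
Ehrenfeucht–Fraïssé game shows that the truth of a sentence depends only on the rank `K` type of
the word, for some `K`.

Over a finite alphabet there is, for each rank, a word `z` absorbing everything: `z u z` has the
same type as `z` for all `u`. As satisfaction is invariant under rotating the word, all circular
words with a factor `z` agree on the sentence. Choosing `z` among the words of letters of
positive probability, disjoint blocks of the circle are independent and each spells `z` with the
same positive probability, so the code contains `z` with probability tending to `1`.
-/

section WordType

universe u v

variable {A : Type u} {B : Type v} {k : ℕ}

/-- The set in which rank `k` types of words over `A` live. -/
def WordType (A : Type u) : ℕ → Type u
  | 0 => PUnit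
  | k + 1 => Set (WordType A k × A × WordType A k)

/-- The rank `k` type of a word: for `k + 1`, the set of all triples formed by a letter of the word
and the rank `k` types of the words to its left and to its right. -/
def wordType : (k : ℕ) → List A → WordType A k
  | 0, _ => PUnit.unit
  | k + 1, w => {t | ∃ x a y, w = x ++ a :: y ∧ t = (wordType k x, a, wordType k y)}

/-- Every splitting of `u` at a letter is matched, up to types of rank `k`, by a splitting of `v`
at the same letter. -/
def SplitsLift (k : ℕ) (u v : List A) : Prop :=
  ∀ x a y, u = x ++ a :: y →
    ∃ x' y', v = x' ++ a :: y' ∧ wordType k x = wordType k x' ∧ wordType k y = wordType k y'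

theorem finite_wordType (A : Type u) [Finite A] : ∀ k, Finite (WordType A k)
  | 0 => inferInstanceAs (Finite PUnit)
  | k + 1 =>
    haveI := finite_wordType A k
    inferInstanceAs (Finite (Set (WordType A k × A × WordType A k)))

theorem splitsLift_iff_subset {u v : List A} :
    SplitsLift k u v ↔
      {t | ∃ x a y, u = x ++ a :: y ∧ t = (wordType k x, a, wordType k y)} ⊆
        {t | ∃ x a y, v = x ++ a :: y ∧ t = (wordType k x, a, wordType k y)} := by
  constructor
  · rintro h t ⟨x, a, y, hu, rfl⟩
    obtain ⟨x', y', hv, hx, hy⟩ := h x a y hu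
    exact ⟨x', a, y', hv, by rw [hx, hy]⟩
  · intro h x a y hu
    obtain ⟨x', a', y', hv, hxy⟩ := h ⟨x, a, y, hu, rfl⟩
    obtain ⟨hx, rfl, hy⟩ := by simpa only [Prod.mk.injEq] using hxy
    exact ⟨x', y', hv, hx, hy⟩

theorem wordType_succ_eq_iff {u v : List A} :
    wordType (k + 1) u = wordType (k + 1) v ↔ SplitsLift k u v ∧ SplitsLift k v u := by
  rw [splitsLift_iff_subset, splitsLift_iff_subset]
  exact Set.Subset.antisymm_iff

theorem wordType_eq_of_succ : ∀ {k : ℕ} {u v : List A},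
    wordType (k + 1) u = wordType (k + 1) v → wordType k u = wordType k v
  | 0, _, _, _ => rfl
  | k + 1, _, _, h => by
    have lower {u v : List A} (huv : SplitsLift (k + 1) u v) : SplitsLift k u v := by
      intro x a y hu
      obtain ⟨x', y', hv, hx, hy⟩ := huv x a y hu
      exact ⟨x', y', hv, wordType_eq_of_succ hx, wordType_eq_of_succ hy⟩
    rw [wordType_succ_eq_iff] at h ⊢
    exact ⟨lower h.1, lower h.2⟩

theorem append_eq_append_cons {u v x y : List A} {a : A} (h : u ++ v = x ++ a :: y) :
    (∃ s, u = x ++ a :: s ∧ y = s ++ v) ∨ ∃ s, x = u ++ s ∧ v = s ++ a :: y := by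
  obtain ⟨s, hx, hv⟩ | ⟨s, hu, hv⟩ := List.append_eq_append_iff.1 h
  · exact Or.inr ⟨s, hx, hv⟩
  · cases s with
    | nil => exact Or.inr ⟨[], by simpa using hu.symm, by simpa using hv.symm⟩
    | cons b s =>
      obtain ⟨rfl, rfl⟩ := List.cons.inj hv
      exact Or.inl ⟨s, hu, rfl⟩

theorem wordType_append : ∀ {k : ℕ} {u u' v v' : List A}, wordType k u = wordType k u' →
    wordType k v = wordType k v' → wordType k (u ++ v) = wordType k (u' ++ v')
  | 0, _, _, _, _, _, _ => rfl
  | k + 1, _, _, _, _, hu, hv => by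
    have lift {u u' v v' : List A} (hu : wordType (k + 1) u = wordType (k + 1) u')
        (hv : wordType (k + 1) v = wordType (k + 1) v') : SplitsLift k (u ++ v) (u' ++ v') := by
      intro x a y huv
      obtain ⟨s, rfl, rfl⟩ | ⟨s, rfl, rfl⟩ := append_eq_append_cons huv
      · obtain ⟨x', s', rfl, hx, hs⟩ := (wordType_succ_eq_iff.1 hu).1 x a s rfl
        exact ⟨x', s' ++ v', by simp, hx, wordType_append hs (wordType_eq_of_succ hv)⟩
      · obtain ⟨s', y', rfl, hs, hy⟩ := (wordType_succ_eq_iff.1 hv).1 s a y rfl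
        exact ⟨u' ++ s', y', by simp, wordType_append (wordType_eq_of_succ hu) hs, hy⟩
    exact wordType_succ_eq_iff.2 ⟨lift hu hv, lift hu.symm hv.symm⟩

theorem wordType_map (f : A → B) : ∀ {k : ℕ} {u v : List A}, wordType k u = wordType k v →
    wordType k (u.map f) = wordType k (v.map f)
  | 0, _, _, _ => rfl
  | k + 1, _, _, h => by
    have lift {u v : List A} (huv : SplitsLift k u v) : SplitsLift k (u.map f) (v.map f) := by
      intro x b y hu
      obtain ⟨x, l, rfl, rfl, hl⟩ := List.map_eq_append_iff.1 hu
      obtain ⟨a, y, rfl, rfl, rfl⟩ := List.map_eq_cons_iff.1 hl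
      obtain ⟨x', y', rfl, hx, hy⟩ := huv x a y rfl
      exact ⟨x'.map f, y'.map f, by simp, wordType_map f hx, wordType_map f hy⟩
    rw [wordType_succ_eq_iff] at h ⊢
    exact ⟨lift h.1, lift h.2⟩

theorem min_length_eq_of_wordType_eq : ∀ {k : ℕ} {u v : List A},
    wordType k u = wordType k v → min u.length k = min v.length k
  | 0, _, _, _ => by simp only [Nat.min_zero]
  | _ + 1, [], [], _ => rfl
  | _ + 1, [], b :: v, h => by
    obtain ⟨x', y', h_nil, -⟩ := (wordType_succ_eq_iff.1 h).2 [] b v rfl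
    simp at h_nil
  | k + 1, a :: u, v, h => by
    obtain ⟨x', y', rfl, hx, hy⟩ := (wordType_succ_eq_iff.1 h).1 [] a u rfl
    have hx_length := min_length_eq_of_wordType_eq hx
    have hy_length := min_length_eq_of_wordType_eq hy
    simp only [List.length_nil, List.length_cons, List.length_append] at hx_length ⊢
    omega

theorem eq_nil_of_wordType_eq_nil {u : List A} (h : wordType (k + 1) [] = wordType (k + 1) u) :
    u = [] := by
  have := min_length_eq_of_wordType_eq h
  rw [← List.length_eq_zero_iff]
  simp only [List.length_nil] at this
  omega

theorem head?_eq_of_wordType_eq {u v : List A} (h : wordType (k + 2) u = wordType (k + 2) v) :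
    u.head? = v.head? := by
  cases u with
  | nil => rw [eq_nil_of_wordType_eq_nil h]
  | cons a u =>
    obtain ⟨x', y', rfl, hx, -⟩ := (wordType_succ_eq_iff.1 h).1 [] a u rfl
    rw [eq_nil_of_wordType_eq_nil hx]
    rfl

theorem exists_cut_of_wordType_eq {u v : List A} (h : wordType (k + 1) u = wordType (k + 1) v)
    {i : ℕ} (hi : i < u.length) :
    ∃ j < v.length, wordType k (u.take i) = wordType k (v.take j) ∧
      wordType k (u.drop i) = wordType k (v.drop j) := by
  obtain ⟨x, y, rfl, hx, hy⟩ := (wordType_succ_eq_iff.1 h).1 (u.take i) u[i] (u.drop (i + 1))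
    (by rw [← List.drop_eq_getElem_cons hi, List.take_append_drop])
  refine ⟨x.length, by simp, ?_, ?_⟩
  · rwa [List.take_left' rfl]
  · rw [List.drop_left' rfl, List.drop_eq_getElem_cons hi]
    exact wordType_append (u := [_]) (u' := [_]) rfl hy

end WordType

section AbsorbingWord

universe u

variable {A : Type u} {k : ℕ}

theorem exists_word_containing_all_splits [Finite A] (k : ℕ) (e : List A) :
    ∃ c : List A, ∀ x a y, ∃ x' y', wordType k x = wordType k x' ∧ wordType k y = wordType k y' ∧
      e ++ x' ++ a :: (y' ++ e) <:+: c := by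
  have := finite_wordType A k
  obtain ⟨triples, h_triples⟩ := Finite.exists_univ_list (WordType A k × A × WordType A k)
  let rep : WordType A k → List A := Function.invFun (wordType k)
  have wordType_rep (w : List A) : wordType k w = wordType k (rep (wordType k w)) :=
    (Function.invFun_eq ⟨w, rfl⟩).symm
  refine ⟨(triples.map fun t => e ++ rep t.1 ++ t.2.1 :: (rep t.2.2 ++ e)).flatten, fun x a y =>
    ⟨rep (wordType k x), rep (wordType k y), wordType_rep x, wordType_rep y, ?_⟩⟩
  exact List.infix_of_mem_flatten
    (List.mem_map.2 ⟨(wordType k x, a, wordType k y), h_triples.2 _, rfl⟩)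

-- A letter of `m` is matched inside `c`, where copies of `e` absorb everything around its
-- neighbours.
theorem splitsLift_of_infix {e c m m' : List A}
    (he : ∀ u, wordType k (e ++ u ++ e) = wordType k e)
    (hc : ∀ x a y, ∃ x' y', wordType k x = wordType k x' ∧ wordType k y = wordType k y' ∧
      e ++ x' ++ a :: (y' ++ e) <:+: c) (hm' : c <:+: m') :
    SplitsLift k (e ++ (e ++ m ++ e) ++ e) (e ++ (e ++ m' ++ e) ++ e) := by
  intro x a y h
  have h_mid : wordType k (e ++ m ++ e) = wordType k (e ++ m' ++ e) := (he m).trans (he m').symm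
  rcases append_eq_append_cons h with ⟨s, h_left, rfl⟩ | ⟨s, rfl, h_last⟩
  · rcases append_eq_append_cons h_left with ⟨t, h_first, rfl⟩ | ⟨t, rfl, -⟩
    · exact ⟨x, t ++ (e ++ m' ++ e) ++ e,
        by simpa using congrArg (· ++ (e ++ m' ++ e) ++ e) h_first, rfl,
        wordType_append (wordType_append rfl h_mid) rfl⟩
    · obtain ⟨t', s', ht, hs, h_infix⟩ := hc t a s
      obtain ⟨p, q, rfl⟩ := h_infix.trans hm'
      exact ⟨e ++ (e ++ p) ++ e ++ t', s' ++ (e ++ (q ++ e) ++ e), by simp,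
        wordType_append (he _).symm ht, wordType_append hs (he _).symm⟩
  · exact ⟨e ++ (e ++ m' ++ e) ++ s, y, by simpa using congrArg (e ++ (e ++ m' ++ e) ++ ·) h_last,
      wordType_append (wordType_append rfl h_mid) rfl, rfl⟩

theorem exists_absorbing_word (A : Type u) [Finite A] :
    ∀ k, ∃ z : List A, ∀ u, wordType k (z ++ u ++ z) = wordType k z
  | 0 => ⟨[], fun _ => rfl⟩
  | k + 1 => by
    obtain ⟨e, he⟩ := exists_absorbing_word A k
    obtain ⟨c, hc⟩ := exists_word_containing_all_splits k e
    refine ⟨e ++ (e ++ c ++ e) ++ e, fun u => ?_⟩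
    have h_infix : c <:+: c ++ e ++ e ++ u ++ e ++ e ++ c :=
      ⟨[], e ++ e ++ u ++ e ++ e ++ c, by simp⟩
    have h_eq := wordType_succ_eq_iff.2
      ⟨splitsLift_of_infix he hc h_infix, splitsLift_of_infix he hc List.infix_rfl⟩
    simpa only [List.append_assoc] using h_eq.symm

end AbsorbingWord

section BackAndForth

universe u v w w'

variable {L : FirstOrder.Language.{u, v}} {M : Type w} {M' : Type w'}
  [L.Structure M] [L.Structure M']

/-- The nesting depth of quantifiers in a first-order formula. -/
def quantifierRank {α : Type*} : {r : ℕ} → L.BoundedFormula α r → ℕ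
  | _, .falsum => 0
  | _, .equal _ _ => 0
  | _, .rel _ _ => 0
  | _, .imp φ₁ φ₂ => max (quantifierRank φ₁) (quantifierRank φ₂)
  | _, .all φ => quantifierRank φ + 1

variable (L) in
/-- A winning strategy for the duplicator in the Ehrenfeucht–Fraïssé game between `M` and `M'`:
`I k xs ys` says that the position `(xs, ys)` can be held for `k` further rounds. -/
structure IsBackAndForth (I : ℕ → ∀ {r : ℕ}, (Fin r → M) → (Fin r → M') → Prop) : Prop where
  eq_iff {k r : ℕ} {xs : Fin r → M} {ys : Fin r → M'} (h : I k xs ys) (i j : Fin r) :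
    xs i = xs j ↔ ys i = ys j
  relMap_iff {k r : ℕ} {xs : Fin r → M} {ys : Fin r → M'} (h : I k xs ys) {l : ℕ}
    (R : L.Relations l) (g : Fin l → Fin r) :
    Language.Structure.RelMap R (xs ∘ g) ↔ Language.Structure.RelMap R (ys ∘ g)
  forth {k r : ℕ} {xs : Fin r → M} {ys : Fin r → M'} (h : I (k + 1) xs ys) (x : M) :
    ∃ y, I k (Fin.snoc xs x : Fin (r + 1) → M) (Fin.snoc ys y : Fin (r + 1) → M')
  back {k r : ℕ} {xs : Fin r → M} {ys : Fin r → M'} (h : I (k + 1) xs ys) (y : M') :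
    ∃ x, I k (Fin.snoc xs x : Fin (r + 1) → M) (Fin.snoc ys y : Fin (r + 1) → M')

theorem exists_term_eq_var [L.IsRelational] {r : ℕ} :
    ∀ t : L.Term (Empty ⊕ Fin r), ∃ i, t = Language.Term.var (Sum.inr i)
  | .var (.inl x) => x.elim
  | .var (.inr i) => ⟨i, rfl⟩
  | .func f _ => isEmptyElim f

theorem IsBackAndForth.realize_iff [L.IsRelational]
    {I : ℕ → ∀ {r : ℕ}, (Fin r → M) → (Fin r → M') → Prop} (hI : IsBackAndForth L I)
    {r : ℕ} (φ : L.BoundedFormula Empty r) {k : ℕ} (hk : quantifierRank φ ≤ k)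
    {xs : Fin r → M} {ys : Fin r → M'} (h : I k xs ys) :
    φ.Realize default xs ↔ φ.Realize default ys := by
  induction φ generalizing k with
  | falsum => rfl
  | equal t₁ t₂ =>
    obtain ⟨i, rfl⟩ := exists_term_eq_var t₁
    obtain ⟨j, rfl⟩ := exists_term_eq_var t₂
    exact hI.eq_iff h i j
  | rel R ts =>
    choose g hg using fun i => exists_term_eq_var (ts i)
    obtain rfl : ts = fun i => Language.Term.var (Sum.inr (g i)) := funext hg
    exact hI.relMap_iff h R g
  | imp φ₁ φ₂ ih₁ ih₂ =>
    exact imp_congr (ih₁ (le_of_max_le_left hk) h) (ih₂ (le_of_max_le_right hk) h)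
  | all φ ih =>
    obtain ⟨k, rfl⟩ := Nat.exists_eq_add_of_le' (Nat.le_of_add_left_le hk)
    have hk : quantifierRank φ ≤ k := Nat.le_of_succ_le_succ hk
    constructor
    · intro h_all y
      obtain ⟨x, hxy⟩ := hI.back h y
      exact (ih hk hxy).1 (h_all x)
    · intro h_all x
      obtain ⟨y, hxy⟩ := hI.forth h x
      exact (ih hk hxy).2 (h_all y)

end BackAndForth

section Matching

universe u

variable {A : Type u} {k : ℕ} {w w' : List A} {P : Set (ℕ × ℕ)}

/-- The factor of `w` formed by the letters at positions `a ≤ i < b`, empty if `b ≤ a`. -/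
def factor (w : List A) (a b : ℕ) : List A := (w.drop a).take (b - a)

theorem length_factor {a b : ℕ} (hb : b ≤ w.length) : (factor w a b).length = b - a := by
  simp only [factor, List.length_take, List.length_drop]
  omega

theorem factor_eq_nil {a b : ℕ} (h : b ≤ a) : factor w a b = [] := by
  rw [factor, Nat.sub_eq_zero_of_le h, List.take_zero]

theorem factor_append_factor {a b c : ℕ} (hab : a ≤ b) (hbc : b ≤ c) :
    factor w a b ++ factor w b c = factor w a c := by
  have h_drop : w.drop b = (w.drop a).drop (b - a) := by
    rw [List.drop_drop, Nat.add_sub_cancel' hab]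
  rw [factor, factor, factor, h_drop, ← List.take_add]
  congr 1
  omega

theorem head?_factor {a b : ℕ} (h : a < b) : (factor w a b).head? = w[a]? := by
  rw [factor, List.head?_take, if_neg (by omega), List.head?_drop]

theorem factor_zero_length : factor w 0 w.length = w := by
  simp [factor]

theorem take_factor {a x b : ℕ} (hxb : x ≤ b) :
    (factor w a b).take (x - a) = factor w a x := by
  rw [factor, factor, List.take_take, min_eq_left (by omega)]

theorem drop_factor {a x b : ℕ} (hax : a ≤ x) :
    (factor w a b).drop (x - a) = factor w x b := by
  rw [factor, factor, List.drop_take, List.drop_drop]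
  congr 1
  · omega
  · congr 1
    omega

/-- A position of the Ehrenfeucht–Fraïssé game on two words: a set of pairs of cut points of `w` and
`w'`, including both pairs of endpoints, such that corresponding factors have the same type. -/
structure Matching (k : ℕ) (w w' : List A) (P : Set (ℕ × ℕ)) : Prop where
  zero_mem : (0, 0) ∈ P
  length_mem : (w.length, w'.length) ∈ P
  fst_le {p : ℕ × ℕ} (hp : p ∈ P) : p.1 ≤ w.length
  snd_le {p : ℕ × ℕ} (hp : p ∈ P) : p.2 ≤ w'.length
  factor_eq {p q : ℕ × ℕ} (hp : p ∈ P) (hq : q ∈ P) :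
    wordType k (factor w p.1 q.1) = wordType k (factor w' p.2 q.2)

namespace Matching

theorem swap (h : Matching k w w' P) : Matching k w' w (Prod.swap ⁻¹' P) where
  zero_mem := h.zero_mem
  length_mem := h.length_mem
  fst_le hp := h.snd_le hp
  snd_le hp := h.fst_le hp
  factor_eq hp hq := (h.factor_eq hp hq).symm

theorem of_wordType_eq (h : wordType k w = wordType k w') :
    Matching k w w' {(0, 0), (w.length, w'.length)} where
  zero_mem := by simp
  length_mem := by simp
  fst_le := by rintro p (rfl | rfl) <;> simp
  snd_le := by rintro p (rfl | rfl) <;> simp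
  factor_eq := by
    rintro p q (rfl | rfl) (rfl | rfl)
    · simp only [factor_eq_nil le_rfl]
    · simpa only [factor_zero_length] using h
    · simp only [factor_eq_nil (Nat.zero_le _)]
    · simp only [factor_eq_nil le_rfl]

theorem min_sub_eq (h : Matching k w w' P) {p q : ℕ × ℕ} (hp : p ∈ P) (hq : q ∈ P) :
    min (q.1 - p.1) k = min (q.2 - p.2) k := by
  have := min_length_eq_of_wordType_eq (h.factor_eq hp hq)
  rwa [length_factor (h.fst_le hq), length_factor (h.snd_le hq)] at this

theorem sub_eq_sub (h : Matching k w w' P) {p q : ℕ × ℕ} (hp : p ∈ P) (hq : q ∈ P)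
    (hk : q.1 - p.1 < k) : q.2 - p.2 = q.1 - p.1 := by
  have := h.min_sub_eq hp hq
  omega

theorem le_iff (h : Matching (k + 1) w w' P) {p q : ℕ × ℕ} (hp : p ∈ P) (hq : q ∈ P) :
    p.1 ≤ q.1 ↔ p.2 ≤ q.2 := by
  have := h.min_sub_eq hq hp
  omega

theorem getElem?_eq (h : Matching (k + 2) w w' P) {p : ℕ × ℕ} (hp : p ∈ P) :
    w[p.1]? = w'[p.2]? := by
  have h_le := h.le_iff h.length_mem hp
  by_cases hw : w.length ≤ p.1
  · rw [List.getElem?_eq_none hw, List.getElem?_eq_none (h_le.1 hw)]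
  · rw [← head?_factor (not_le.1 hw), ← head?_factor (not_le.1 (mt h_le.2 hw))]
    exact head?_eq_of_wordType_eq (h.factor_eq hp h.length_mem)

theorem exists_adjacent (h : Matching (k + 1) w w' P) {x : ℕ} (hx : x < w.length) :
    ∃ p ∈ P, ∃ q ∈ P, p.1 ≤ x ∧ x < q.1 ∧
      ∀ s ∈ P, s.1 ≤ p.1 ∧ s.2 ≤ p.2 ∨ q.1 ≤ s.1 ∧ q.2 ≤ s.2 := by
  let Below : Set (ℕ × ℕ) := {p | p ∈ P ∧ p.1 ≤ x}
  let Above : Set (ℕ × ℕ) := {p | p ∈ P ∧ x < p.1}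
  obtain ⟨p, ⟨hp, hpx⟩, hp_max⟩ :=
    (measure fun p : ℕ × ℕ => x - p.1).wf.has_min Below ⟨_, h.zero_mem, Nat.zero_le x⟩
  obtain ⟨q, ⟨hq, hxq⟩, hq_min⟩ :=
    (measure fun p : ℕ × ℕ => p.1).wf.has_min Above ⟨_, h.length_mem, hx⟩
  refine ⟨p, hp, q, hq, hpx, hxq, fun s hs => ?_⟩
  rcases le_or_gt s.1 x with hsx | hxs
  · have h_le : s.1 ≤ p.1 := by
      have : ¬ x - s.1 < x - p.1 := hp_max s ⟨hs, hsx⟩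
      omega
    exact Or.inl ⟨h_le, (h.le_iff hs hp).1 h_le⟩
  · have h_le : q.1 ≤ s.1 := not_lt.1 (hq_min s ⟨hs, hxs⟩)
    exact Or.inr ⟨h_le, (h.le_iff hq hs).1 h_le⟩

theorem insert_of_factor_eq (h : Matching (k + 1) w w' P) {p q : ℕ × ℕ} (hp : p ∈ P) (hq : q ∈ P)
    (h_adj : ∀ s ∈ P, s.1 ≤ p.1 ∧ s.2 ≤ p.2 ∨ q.1 ≤ s.1 ∧ q.2 ≤ s.2) {x y : ℕ}
    (hx : p.1 ≤ x ∧ x ≤ q.1) (hy : p.2 ≤ y ∧ y ≤ q.2)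
    (h_left : wordType k (factor w p.1 x) = wordType k (factor w' p.2 y))
    (h_right : wordType k (factor w x q.1) = wordType k (factor w' y q.2)) :
    Matching k w w' (insert (x, y) P) := by
  have h_to {s : ℕ × ℕ} (hs : s ∈ P) :
      wordType k (factor w s.1 x) = wordType k (factor w' s.2 y) := by
    rcases h_adj s hs with ⟨h₁, h₂⟩ | ⟨h₁, h₂⟩
    · rw [← factor_append_factor h₁ hx.1, ← factor_append_factor h₂ hy.1]
      exact wordType_append (wordType_eq_of_succ (h.factor_eq hs hp)) h_left
    · rw [factor_eq_nil (hx.2.trans h₁), factor_eq_nil (hy.2.trans h₂)]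
  have h_from {s : ℕ × ℕ} (hs : s ∈ P) :
      wordType k (factor w x s.1) = wordType k (factor w' y s.2) := by
    rcases h_adj s hs with ⟨h₁, h₂⟩ | ⟨h₁, h₂⟩
    · rw [factor_eq_nil (h₁.trans hx.1), factor_eq_nil (h₂.trans hy.1)]
    · rw [← factor_append_factor hx.2 h₁, ← factor_append_factor hy.2 h₂]
      exact wordType_append h_right (wordType_eq_of_succ (h.factor_eq hq hs))
  refine ⟨Or.inr h.zero_mem, Or.inr h.length_mem, ?_, ?_, ?_⟩
  · rintro s (rfl | hs)
    exacts [hx.2.trans (h.fst_le hq), h.fst_le hs]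
  · rintro s (rfl | hs)
    exacts [hy.2.trans (h.snd_le hq), h.snd_le hs]
  · rintro s t (rfl | hs) (rfl | ht)
    · simp only [factor_eq_nil le_rfl]
    · exact h_from ht
    · exact h_to hs
    · exact wordType_eq_of_succ (h.factor_eq hs ht)

theorem exists_insert (h : Matching (k + 1) w w' P) {x : ℕ} (hx : x < w.length) :
    ∃ y < w'.length, Matching k w w' (insert (x, y) P) := by
  obtain ⟨p, hp, q, hq, hpx, hxq, h_adj⟩ := h.exists_adjacent hx
  have h_length := length_factor (a := p.1) (h.fst_le hq)
  have hq_le := h.snd_le hq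
  obtain ⟨j, hj, h_left, h_right⟩ :=
    exists_cut_of_wordType_eq (h.factor_eq hp hq) (i := x - p.1) (by omega)
  rw [length_factor hq_le] at hj
  obtain ⟨y, hpy, rfl⟩ : ∃ y, p.2 ≤ y ∧ j = y - p.2 := ⟨j + p.2, by omega, by omega⟩
  rw [take_factor hxq.le, take_factor (by omega)] at h_left
  rw [drop_factor hpx, drop_factor hpy] at h_right
  exact ⟨y, by omega, h.insert_of_factor_eq hp hq h_adj ⟨hpx, hxq.le⟩ ⟨hpy, by omega⟩
    h_left h_right⟩

end Matching

end Matching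

section CircularGraph

variable {N k : ℕ} {w w' : List (Fin N → Bool)} {P : Set (ℕ × ℕ)}

/-- The arcs of the circular graph coded by `w`: bit `d` of the letter at position `i` says whether
there is an arc from `i` to the position `d + 1` steps further clockwise. -/
def circArc (w : List (Fin N → Bool)) (i j : ℕ) : Prop :=
  ∃ a ∈ w[i]?, ∃ d : Fin N, a d = true ∧ j = (i + d + 1) % w.length

/-- Adjacency in the circular graph coded by `w`. -/
def circAdj (w : List (Fin N → Bool)) (i j : ℕ) : Prop := circArc w i j ∨ circArc w j i

instance : Lcyc.IsRelational := fun _ => inferInstanceAs (IsEmpty Empty)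

/-- The circular graph coded by `w`, as an `L≤^c`-structure. -/
instance wordStructure (w : List (Fin N → Bool)) : Lcyc.Structure (Fin w.length) where
  funMap := fun f _ => Empty.elim f
  RelMap
    | .adj => fun x => circAdj w (x 0) (x 1)
    | .btw => fun x => cyclicBtw (x 0) (x 1) (x 2)

/-- Satisfaction of a sentence of `L≤^c` in the circular graph coded by `w`. -/
def SatWord (w : List (Fin N → Bool)) (ψ : Lcyc.Sentence) : Prop :=
  ψ.Realize (Fin w.length)

theorem Matching.snd_eq_mod (h : Matching (k + N + 2) w w' P) {p q : ℕ × ℕ} (hp : p ∈ P)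
    (hq : q ∈ P) (hp_lt : p.1 < w.length) {d : ℕ} (hd : d < N)
    (h_mod : q.1 = (p.1 + d + 1) % w.length) : q.2 = (p.2 + d + 1) % w'.length := by
  have hq_lt : q.1 < w.length := h_mod ▸ Nat.mod_lt _ (by omega)
  have hq_le := (h.le_iff h.length_mem hq).not
  rcases le_or_gt w.length N with h_short | h_long
  · have hp_eq : p.2 = p.1 := h.sub_eq_sub h.zero_mem hp (by dsimp only; omega)
    have hq_eq : q.2 = q.1 := h.sub_eq_sub h.zero_mem hq (by dsimp only; omega)
    have h_length_eq : w'.length = w.length :=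
      h.sub_eq_sub h.zero_mem h.length_mem (by dsimp only; omega)
    rw [hp_eq, hq_eq, h_length_eq, h_mod]
  rcases lt_or_ge (p.1 + d + 1) w.length with h_no_wrap | h_wrap
  · rw [Nat.mod_eq_of_lt h_no_wrap] at h_mod
    have h_step := h.sub_eq_sub hp hq (by omega)
    rw [Nat.mod_eq_of_lt (by omega)]
    omega
  · rw [Nat.mod_eq_sub_mod h_wrap, Nat.mod_eq_of_lt (by omega)] at h_mod
    have h_before := h.sub_eq_sub hp h.length_mem (by dsimp only; omega)
    have h_after : q.2 = q.1 := h.sub_eq_sub h.zero_mem hq (by dsimp only; omega)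
    rw [Nat.mod_eq_sub_mod (by omega), Nat.mod_eq_of_lt (by omega)]
    omega

theorem Matching.circArc_of_circArc (h : Matching (k + N + 2) w w' P) {p q : ℕ × ℕ} (hp : p ∈ P)
    (hq : q ∈ P) : circArc w p.1 q.1 → circArc w' p.2 q.2 := by
  rintro ⟨a, ha, d, hd, h_mod⟩
  have hp_lt : p.1 < w.length := (List.getElem?_eq_some_iff.1 ha).1
  rw [h.getElem?_eq hp] at ha
  exact ⟨a, ha, d, hd, h.snd_eq_mod hp hq hp_lt d.2 h_mod⟩

theorem Matching.circArc_iff (h : Matching (k + N + 2) w w' P) {p q : ℕ × ℕ} (hp : p ∈ P)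
    (hq : q ∈ P) : circArc w p.1 q.1 ↔ circArc w' p.2 q.2 :=
  ⟨h.circArc_of_circArc hp hq, h.swap.circArc_of_circArc (p := p.swap) (q := q.swap) hp hq⟩

theorem Matching.circAdj_iff (h : Matching (k + N + 2) w w' P) {p q : ℕ × ℕ} (hp : p ∈ P)
    (hq : q ∈ P) : circAdj w p.1 q.1 ↔ circAdj w' p.2 q.2 :=
  or_congr (h.circArc_iff hp hq) (h.circArc_iff hq hp)

/-- The positions of the game on the circular graphs coded by `w` and `w'` that can be held for `k`
further rounds. The additional rank `N + 2` makes matched words agree on letters and arcs. -/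
def CircPosition (w w' : List (Fin N → Bool)) (k : ℕ) {r : ℕ} (xs : Fin r → Fin w.length)
    (ys : Fin r → Fin w'.length) : Prop :=
  ∃ P, Matching (k + N + 2) w w' P ∧ ∀ i, ((xs i : ℕ), (ys i : ℕ)) ∈ P

theorem CircPosition.symm {r : ℕ} {xs : Fin r → Fin w.length} {ys : Fin r → Fin w'.length} :
    CircPosition w w' k xs ys → CircPosition w' w k ys xs
  | ⟨_, hP, h_mem⟩ => ⟨_, hP.swap, h_mem⟩

theorem CircPosition.exists_snoc {r : ℕ} {xs : Fin r → Fin w.length} {ys : Fin r → Fin w'.length}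
    (h : CircPosition w w' (k + 1) xs ys) (x : Fin w.length) :
    ∃ y, CircPosition w w' k (Fin.snoc xs x : Fin (r + 1) → _)
      (Fin.snoc ys y : Fin (r + 1) → _) := by
  obtain ⟨P, hP, h_mem⟩ := h
  rw [show k + 1 + N + 2 = k + N + 2 + 1 by omega] at hP
  obtain ⟨y, hy, hP'⟩ := hP.exists_insert x.2
  refine ⟨⟨y, hy⟩, _, hP', Fin.lastCases ?_ fun i => ?_⟩
  · simp
  · simpa using Or.inr (h_mem i)

theorem isBackAndForth_circPosition (w w' : List (Fin N → Bool)) :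
    IsBackAndForth Lcyc (CircPosition w w') where
  eq_iff := by
    rintro k r xs ys ⟨P, hP, h_mem⟩ i j
    have h_le := hP.le_iff (h_mem i) (h_mem j)
    have h_ge := hP.le_iff (h_mem j) (h_mem i)
    simp only [Fin.ext_iff]
    omega
  relMap_iff := by
    rintro k r xs ys ⟨P, hP, h_mem⟩ l R g
    cases R with
    | adj => exact hP.circAdj_iff (h_mem _) (h_mem _)
    | btw =>
      have h_le (i j : Fin 3) : xs (g i) ≤ xs (g j) ↔ ys (g i) ≤ ys (g j) :=
        hP.le_iff (h_mem _) (h_mem _)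
      simp only [Language.Structure.RelMap, cyclicBtw, Function.comp_apply, h_le]
  forth h := h.exists_snoc
  back h y := (h.symm.exists_snoc y).imp fun _ => CircPosition.symm

theorem satWord_iff_of_wordType_eq {ψ : Lcyc.Sentence}
    (h : wordType (quantifierRank ψ + N + 2) w = wordType (quantifierRank ψ + N + 2) w') :
    SatWord w ψ ↔ SatWord w' ψ :=
  (isBackAndForth_circPosition w w').realize_iff ψ le_rfl
    ⟨_, Matching.of_wordType_eq h, fun i => i.elim0⟩

end CircularGraph

section Rotation

variable {N : ℕ}

theorem cyclicBtw_add_right {n : ℕ} (a b c r : Fin n) :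
    cyclicBtw (a + r) (b + r) (c + r) ↔ cyclicBtw a b c := by
  simp only [cyclicBtw, Fin.le_def, Fin.val_add_eq_ite]
  split_ifs <;> omega

theorem circArc_rotate (w : List (Fin N → Bool)) (r : ℕ) {i j : ℕ} (hi : i < w.length)
    (hj : j < w.length) :
    circArc (w.rotate r) i j ↔ circArc w ((i + r) % w.length) ((j + r) % w.length) := by
  have h_mod (d : ℕ) : j = (i + d + 1) % w.length ↔
      (j + r) % w.length = ((i + r) % w.length + d + 1) % w.length := by
    calc j = (i + d + 1) % w.length
      _ ↔ j ≡ i + d + 1 [MOD w.length] := by rw [Nat.ModEq, Nat.mod_eq_of_lt hj]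
      _ ↔ j + r ≡ i + d + 1 + r [MOD w.length] := (Nat.ModEq.add_iff_right rfl).symm
      _ ↔ j + r ≡ (i + r) % w.length + (d + 1) [MOD w.length] := by
        rw [show i + d + 1 + r = i + r + (d + 1) by omega]
        simp only [Nat.ModEq, Nat.mod_add_mod]
      _ ↔ _ := Iff.rfl
  simp only [circArc, List.getElem?_rotate hi, List.length_rotate, h_mod]

theorem satWord_rotate (w : List (Fin N → Bool)) (r : ℕ) (ψ : Lcyc.Sentence) :
    SatWord (w.rotate r) ψ ↔ SatWord w ψ := by
  rcases eq_or_ne w [] with rfl | hw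
  · rw [List.rotate_nil]
  have : NeZero w.length := ⟨List.length_eq_zero_iff.not.2 hw⟩
  let c : Fin (w.rotate r).length ≃ Fin w.length := finCongr (w.length_rotate r)
  let e : Fin (w.rotate r).length ≃ Fin w.length :=
    c.trans (Equiv.addRight (Fin.ofNat w.length r))
  have e_val (i : Fin (w.rotate r).length) : (e i : ℕ) = (i + r) % w.length := by
    simp [e, c, Fin.val_add]
  have e_lt (i : Fin (w.rotate r).length) : (i : ℕ) < w.length := w.length_rotate r ▸ i.2
  let e' : Fin (w.rotate r).length ≃[Lcyc] Fin w.length :=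
    { e with
      map_fun' := fun f => Empty.elim f
      map_rel' := fun R x => by
        cases R with
        | adj =>
          change circAdj w (e (x 0)) (e (x 1)) ↔ circAdj (w.rotate r) (x 0) (x 1)
          simp only [circAdj, circArc_rotate w r (e_lt _) (e_lt _), e_val]
        | btw => exact cyclicBtw_add_right (c (x 0)) (c (x 1)) (c (x 2)) _ }
  exact Language.StrongHomClass.realize_sentence e' ψ

theorem satWord_append_comm (u v : List (Fin N → Bool)) (ψ : Lcyc.Sentence) :
    SatWord (u ++ v) ψ ↔ SatWord (v ++ u) ψ := by
  rw [← List.rotate_append_length_eq u v, satWord_rotate]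

end Rotation

section DecidingWord

variable {N : ℕ}

-- An absorbing word `z` may be doubled; turning the circle so that the cut falls between the two
-- copies puts everything else between them, where it is absorbed.
theorem exists_deciding_word {B : Type*} [Finite B] (f : B → Fin N → Bool) (ψ : Lcyc.Sentence) :
    ∃ z : List B, ∀ s t, SatWord ((s ++ z ++ t).map f) ψ ↔ SatWord (z.map f) ψ := by
  obtain ⟨z, hz⟩ := exists_absorbing_word B (quantifierRank ψ + N + 2)
  refine ⟨z, fun s t => ?_⟩
  have h_double : wordType (quantifierRank ψ + N + 2) z =
      wordType (quantifierRank ψ + N + 2) (z ++ z) := by simpa using (hz []).symm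
  calc SatWord ((s ++ z ++ t).map f) ψ
    _ ↔ SatWord ((s ++ (z ++ z) ++ t).map f) ψ := satWord_iff_of_wordType_eq
      (wordType_map f (wordType_append (wordType_append rfl h_double) rfl))
    _ ↔ SatWord ((s ++ z).map f ++ (z ++ t).map f) ψ := by simp
    _ ↔ SatWord ((z ++ (t ++ s) ++ z).map f) ψ := by rw [satWord_append_comm]; simp
    _ ↔ SatWord (z.map f) ψ := satWord_iff_of_wordType_eq (wordType_map f (hz _))

theorem exists_deciding_word_of_forall_mem (Good : (Fin N → Bool) → Prop) (ψ : Lcyc.Sentence) :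
    ∃ z : List (Fin N → Bool), (∀ a ∈ z, Good a) ∧
      ∀ w, (∀ a ∈ w, Good a) → z <:+: w → (SatWord w ψ ↔ SatWord z ψ) := by
  obtain ⟨z, hz⟩ := exists_deciding_word (fun a : {a // Good a} => a.1) ψ
  refine ⟨z.map Subtype.val, by simp +contextual, ?_⟩
  rintro _ hw ⟨s, t, rfl⟩
  simp only [List.mem_append] at hw
  lift s to List {a // Good a} using fun a ha => hw a (Or.inl (Or.inl ha))
  lift t to List {a // Good a} using fun a ha => hw a (Or.inr ha)
  simpa using hz s t

end DecidingWord

section ProductWeight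

variable {ι κ J T R : Type*} [Fintype ι] [DecidableEq ι] [Fintype κ] [Fintype T] [CommRing R]
  {μ : ι → κ → R}

theorem sum_prod_mul_prod (hμ : ∀ i, ∑ b, μ i b = 1) (S : Finset ι) (h : ι → κ → R) :
    ∑ ω : ι → κ, (∏ i, μ i (ω i)) * ∏ i ∈ S, h i (ω i) = ∏ i ∈ S, ∑ b, μ i b * h i b := by
  let g (i : ι) (b : κ) : R := μ i b * if i ∈ S then h i b else 1
  have sum_g (i : ι) : ∑ b, g i b = if i ∈ S then ∑ b, μ i b * h i b else 1 := by
    by_cases hi : i ∈ S <;> simp [g, hi, hμ]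
  calc ∑ ω : ι → κ, (∏ i, μ i (ω i)) * ∏ i ∈ S, h i (ω i)
    _ = ∑ ω : ι → κ, ∏ i, g i (ω i) := by
      simp only [g, Finset.prod_mul_distrib, Fintype.prod_ite_mem]
    _ = ∏ i, ∑ b, g i b := by rw [Finset.prod_univ_sum, Fintype.piFinset_univ]
    _ = ∏ i ∈ S, ∑ b, μ i b * h i b := by simp only [sum_g, Fintype.prod_ite_mem]

theorem sum_prod_eq_one (hμ : ∀ i, ∑ b, μ i b = 1) : ∑ ω : ι → κ, ∏ i, μ i (ω i) = 1 := by
  simpa using sum_prod_mul_prod hμ ∅ 1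

variable [DecidableEq κ]

theorem sum_prod_mul_prod_neg_boole (hμ : ∀ i, ∑ b, μ i b = 1) (e : J × T ↪ ι) (s : T → κ)
    (U : Finset J) :
    ∑ ω : ι → κ, (∏ i, μ i (ω i)) * ∏ j ∈ U, -∏ r, (if ω (e (j, r)) = s r then 1 else 0) =
      ∏ j ∈ U, -∏ r, μ (e (j, r)) (s r) := by
  have h_cylinder := sum_prod_mul_prod hμ ((U ×ˢ Finset.univ).map e)
    (Function.extend e (fun x b => if b = s x.2 then 1 else 0) 1)
  simp only [Finset.prod_map, e.injective.extend_apply, Finset.prod_product, mul_ite, mul_one,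
    mul_zero, Finset.sum_ite_eq', Finset.mem_univ, if_true] at h_cylinder
  simp only [Finset.prod_neg, mul_left_comm, ← Finset.mul_sum, h_cylinder]

theorem sum_prod_of_avoids [Fintype J] (hμ : ∀ i, ∑ b, μ i b = 1) (e : J × T ↪ ι) (s : T → κ) :
    ∑ ω : ι → κ, (if ∀ j, ¬ ∀ r, ω (e (j, r)) = s r then ∏ i, μ i (ω i) else 0) =
      ∏ j, (1 - ∏ r, μ (e (j, r)) (s r)) := by
  have one_sub_boole (q : Prop) [Decidable q] :
      (1 - if q then 1 else 0 : R) = if ¬ q then 1 else 0 := by split_ifs <;> simp_all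
  have h_indicator (ω : ι → κ) : (if ∀ j, ¬ ∀ r, ω (e (j, r)) = s r then ∏ i, μ i (ω i) else 0) =
      (∏ i, μ i (ω i)) * ∏ j, (1 - ∏ r, if ω (e (j, r)) = s r then 1 else 0) := by
    simp only [Fintype.prod_boole, one_sub_boole, mul_ite, mul_one, mul_zero]
  simp only [h_indicator, sub_eq_add_neg, Finset.prod_one_add, Finset.mul_sum]
  rw [Finset.sum_comm]
  exact Finset.sum_congr rfl fun U _ => sum_prod_mul_prod_neg_boole hμ e s U

end ProductWeight

section Probability

variable {p : ℕ → ℝ} {n : ℕ}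

/-- The probability that a potential edge at circular distance `d` has the state `b`. -/
noncomputable def edgeWeight (p : ℕ → ℝ) (d : ℕ) (b : Bool) : ℝ := if b then p d else 1 - p d

/-- The distance on the circle between the two ends of a potential edge. -/
def circDist (e : EdgeIdx n) : ℕ := min (e.1.2.val - e.1.1.val) (n - (e.1.2.val - e.1.1.val))

theorem cWeight_eq_prod (p : ℕ → ℝ) (ω : Sample n) :
    cWeight p ω = ∏ e, edgeWeight p (circDist e) (ω e) := rfl

theorem sum_edgeWeight (p : ℕ → ℝ) (d : ℕ) : ∑ b, edgeWeight p d b = 1 := by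
  simp [edgeWeight]

theorem edgeWeight_nonneg (hp : ∀ i, 0 ≤ p i ∧ p i ≤ 1) (d : ℕ) (b : Bool) :
    0 ≤ edgeWeight p d b := by
  cases b
  exacts [sub_nonneg.2 (hp d).2, (hp d).1]

theorem edgeWeight_le_one (hp : ∀ i, 0 ≤ p i ∧ p i ≤ 1) (d : ℕ) (b : Bool) :
    edgeWeight p d b ≤ 1 := by
  rw [← sum_edgeWeight p d]
  exact Finset.single_le_sum (fun b _ => edgeWeight_nonneg hp d b) (Finset.mem_univ b)

theorem edgeWeight_ne_zero_of_cWeight_ne_zero {ω : Sample n} (hω : cWeight p ω ≠ 0)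
    (e : EdgeIdx n) : edgeWeight p (circDist e) (ω e) ≠ 0 :=
  Finset.prod_ne_zero_iff.1 (cWeight_eq_prod p ω ▸ hω) e (Finset.mem_univ e)

theorem cWeight_nonneg (hp : ∀ i, 0 ≤ p i ∧ p i ≤ 1) (ω : Sample n) : 0 ≤ cWeight p ω :=
  Finset.prod_nonneg fun _ _ => edgeWeight_nonneg hp _ _

theorem cPr_nonneg (hp : ∀ i, 0 ≤ p i ∧ p i ≤ 1) (P : Sample n → Prop) : 0 ≤ cPr p n P :=
  Finset.sum_nonneg fun ω _ => by split_ifs <;> simp [cWeight_nonneg hp]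

theorem cPr_mono (hp : ∀ i, 0 ≤ p i ∧ p i ≤ 1) {P Q : Sample n → Prop}
    (h : ∀ ω, cWeight p ω ≠ 0 → P ω → Q ω) : cPr p n P ≤ cPr p n Q := by
  refine Finset.sum_le_sum fun ω _ => ?_
  by_cases hω : cWeight p ω = 0
  · simp only [hω, ite_self, le_refl]
  by_cases hP : P ω
  · simp only [hP, h ω hω hP, if_true, le_refl]
  · simp only [hP, if_false]
    split_ifs <;> simp [cWeight_nonneg hp]

theorem one_sub_cPr_not (p : ℕ → ℝ) (P : Sample n → Prop) :
    1 - cPr p n (fun ω => ¬ P ω) = cPr p n P := by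
  rw [← sum_prod_eq_one fun e : EdgeIdx n => sum_edgeWeight p (circDist e), cPr, cPr,
    ← Finset.sum_sub_distrib]
  refine Finset.sum_congr rfl fun ω _ => ?_
  by_cases hP : P ω <;> simp [hP, cWeight_eq_prod]

theorem tendsto_cPr_zero_or_one_of_decides (hp : ∀ i, 0 ≤ p i ∧ p i ≤ 1)
    {P Q : ∀ n, Sample n → Prop} {c : Prop}
    (hQ : Tendsto (fun n => cPr p n fun ω => ¬ Q n ω) atTop (nhds 0))
    (h : ∀ᶠ n in atTop, ∀ ω, cWeight p ω ≠ 0 → Q n ω → (P n ω ↔ c)) :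
    Tendsto (fun n => cPr p n (P n)) atTop (nhds 0) ∨
      Tendsto (fun n => cPr p n (P n)) atTop (nhds 1) := by
  have tendsto_zero {P : ∀ n, Sample n → Prop}
      (h : ∀ᶠ n in atTop, ∀ ω, cWeight p ω ≠ 0 → Q n ω → ¬ P n ω) :
      Tendsto (fun n => cPr p n (P n)) atTop (nhds 0) := by
    refine squeeze_zero' (.of_forall fun n => cPr_nonneg hp _) ?_ hQ
    filter_upwards [h] with n hn
    exact cPr_mono hp fun ω hω hP hQ => hn ω hω hQ hP
  by_cases hc : c
  · right
    have h_not : Tendsto (fun n => cPr p n fun ω => ¬ P n ω) atTop (nhds 0) := by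
      refine tendsto_zero (h.mono fun n hn ω hω hQ => ?_)
      exact not_not.2 ((hn ω hω hQ).2 hc)
    simpa only [one_sub_cPr_not, sub_zero] using h_not.const_sub 1
  · exact Or.inl (tendsto_zero (h.mono fun n hn ω hω hQ => mt (hn ω hω hQ).1 hc))

end Probability

section Code

variable {p : ℕ → ℝ} {N n : ℕ}

theorem adjVal_comm {ω : Sample n} {a b : ℕ} : adjVal ω a b ↔ adjVal ω b a := by
  simp only [adjVal, or_comm]

theorem adjVal_edge (ω : Sample n) (e : EdgeIdx n) : adjVal ω e.1.1 e.1.2 ↔ ω e = true := by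
  constructor
  · rintro ⟨⟨⟨v, w⟩, hvw⟩, h, ⟨hv, hw⟩ | ⟨hv, hw⟩⟩
    · rwa [show e = ⟨(v, w), hvw⟩ from Subtype.ext (Prod.ext (Fin.ext hv.symm) (Fin.ext hw.symm))]
    · have := e.2
      simp only [Fin.lt_def] at this hvw hv hw
      omega
  · exact fun h => ⟨e, h, Or.inl ⟨rfl, rfl⟩⟩

open scoped Classical in
/-- The word coding an outcome: bit `d` of its letter at `v` says whether `v` is adjacent to the
vertex `d + 1` steps further clockwise. -/
noncomputable def code (N : ℕ) (ω : Sample n) : List (Fin N → Bool) :=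
  List.ofFn fun v : Fin n => fun d : Fin N => decide (adjVal ω v ((v + d + 1) % n))

theorem length_code (N : ℕ) (ω : Sample n) : (code N ω).length = n := List.length_ofFn

theorem circArc_code_iff {ω : Sample n} (v : Fin n) {j : ℕ} :
    circArc (code N ω) v j ↔ adjVal ω v j ∧ ∃ d : Fin N, j = (v + d + 1) % n := by
  simp only [circArc, code, List.length_ofFn, List.getElem?_ofFn, v.2, dite_true,
    Option.mem_some_iff, exists_eq_left', decide_eq_true_eq]
  constructor
  · rintro ⟨d, h, rfl⟩
    exact ⟨h, d, rfl⟩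
  · rintro ⟨h, d, rfl⟩
    exact ⟨d, h, rfl⟩

theorem exists_eq_add_mod_of_circDist_le {e : EdgeIdx n} (he : circDist e ≤ N) :
    (∃ d : Fin N, (e.1.2 : ℕ) = (e.1.1 + d + 1) % n) ∨
      ∃ d : Fin N, (e.1.1 : ℕ) = (e.1.2 + d + 1) % n := by
  obtain ⟨⟨v, w⟩, hvw⟩ := e
  simp only [circDist, inf_le_iff, Fin.lt_def] at he hvw ⊢
  rcases he with h_direct | h_around
  · refine Or.inl ⟨⟨w - v - 1, by omega⟩, ?_⟩
    rw [show v + (w - v - 1) + 1 = (w : ℕ) by omega, Nat.mod_eq_of_lt w.2]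
  · refine Or.inr ⟨⟨n - (w - v) - 1, by omega⟩, ?_⟩
    rw [show w + (n - (w - v) - 1) + 1 = (v : ℕ) + n by omega, Nat.add_mod_right,
      Nat.mod_eq_of_lt v.2]

theorem circDist_le_of_edge (hN : ∀ i, N < i → p i = 0) {ω : Sample n} (hω : cWeight p ω ≠ 0)
    {e : EdgeIdx n} (he : ω e = true) : circDist e ≤ N := by
  by_contra! h_far
  refine edgeWeight_ne_zero_of_cWeight_ne_zero hω e ?_
  rw [he, edgeWeight, if_pos rfl, hN _ h_far]

theorem circAdj_code_iff (hN : ∀ i, N < i → p i = 0) {ω : Sample n} (hω : cWeight p ω ≠ 0)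
    (v w : Fin n) : circAdj (code N ω) v w ↔ sampleAdj ω v w := by
  simp only [circAdj, circArc_code_iff]
  constructor
  · rintro (⟨h, -⟩ | ⟨h, -⟩)
    exacts [h, adjVal_comm.1 h]
  · rintro ⟨e, he, h_ends⟩
    have h_adj := (adjVal_edge ω e).2 he
    have h_arc := (exists_eq_add_mod_of_circDist_le (circDist_le_of_edge hN hω he)).imp
      (And.intro h_adj) (And.intro (adjVal_comm.1 h_adj))
    rcases h_ends with ⟨hv, hw⟩ | ⟨hw, hv⟩
    · rwa [hv, hw] at h_arc
    · rw [hv, hw] at h_arc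
      exact h_arc.symm

theorem satWord_code_iff (hN : ∀ i, N < i → p i = 0) {ω : Sample n} (hω : cWeight p ω ≠ 0)
    (ψ : Lcyc.Sentence) : SatWord (code N ω) ψ ↔ SatCyc ω ψ := by
  let := cycStructure ω
  let c : Fin (code N ω).length ≃ Fin n := finCongr (length_code N ω)
  let e : Fin (code N ω).length ≃[Lcyc] Fin n :=
    { c with
      map_fun' := fun f => Empty.elim f
      map_rel' := fun R x => by
        cases R with
        | adj => exact (circAdj_code_iff hN hω (c (x 0)) (c (x 1))).symm
        | btw => exact Iff.rfl }
  exact Language.StrongHomClass.realize_sentence e ψ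

end Code

section Arc

variable {p : ℕ → ℝ} {N n : ℕ}

/-- The potential edge from `v` to the vertex `d + 1` steps further clockwise. -/
def arc (hn : 2 * N < n) (v : Fin n) (d : Fin N) : EdgeIdx n :=
  if h : (v : ℕ) + d + 1 < n then ⟨(v, ⟨v + d + 1, h⟩), by simp only [Fin.lt_def]; omega⟩
  else ⟨(⟨v + d + 1 - n, by omega⟩, v), by simp only [Fin.lt_def]; omega⟩

theorem circDist_arc (hn : 2 * N < n) (v : Fin n) (d : Fin N) :
    circDist (arc hn v d) = d + 1 := by
  simp only [circDist, arc]
  split_ifs <;> simp only <;> omega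

theorem arc_injective (hn : 2 * N < n) :
    Function.Injective fun x : Fin n × Fin N => arc hn x.1 x.2 := by
  rintro ⟨v, d⟩ ⟨v', d'⟩ h
  have hd : (d : ℕ) + 1 = d' + 1 := by
    rw [← circDist_arc hn v d, ← circDist_arc hn v' d']
    exact congrArg circDist h
  simp only [arc] at h
  refine Prod.ext (Fin.ext ?_) (Fin.ext (by simpa using hd))
  split_ifs at h <;> simp only [Subtype.mk.injEq, Prod.mk.injEq, Fin.ext_iff] at h ⊢ <;> omega

theorem adjVal_arc (hn : 2 * N < n) (ω : Sample n) (v : Fin n) (d : Fin N) :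
    adjVal ω v ((v + d + 1) % n) ↔ ω (arc hn v d) = true := by
  rw [← adjVal_edge, arc]
  split_ifs with h
  · rw [Nat.mod_eq_of_lt h]
  · rw [Nat.mod_eq_sub_mod (by omega), Nat.mod_eq_of_lt (by omega), adjVal_comm]

theorem getElem?_code (hn : 2 * N < n) (ω : Sample n) (v : Fin n) :
    (code N ω)[(v : ℕ)]? = some fun d => ω (arc hn v d) := by
  simp [code, adjVal_arc hn]

theorem edgeWeight_ne_zero_of_mem_code (hn : 2 * N < n) {ω : Sample n} (hω : cWeight p ω ≠ 0)
    {a : Fin N → Bool} (ha : a ∈ code N ω) (d : Fin N) : edgeWeight p (d + 1) (a d) ≠ 0 := by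
  obtain ⟨i, hi⟩ := List.mem_iff_getElem?.1 ha
  obtain ⟨v, rfl⟩ : ∃ v : Fin n, i = v :=
    ⟨⟨i, length_code N ω ▸ (List.getElem?_eq_some_iff.1 hi).1⟩, rfl⟩
  rw [getElem?_code hn, Option.some.injEq] at hi
  rw [← hi, ← circDist_arc hn v d]
  exact edgeWeight_ne_zero_of_cWeight_ne_zero hω _

/-- The potential edges that determine the letters of the code in `m` consecutive blocks of `L`
positions, indexed by block, position within the block and bit. -/
def blockArc (hn : 2 * N < n) {m L : ℕ} (hmL : m * L ≤ n) :
    Fin m × Fin L × Fin N ↪ EdgeIdx n where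
  toFun x := arc hn (Fin.castLE hmL (finProdFinEquiv (x.1, x.2.1))) x.2.2
  inj' := by
    rintro ⟨j, r, d⟩ ⟨j', r', d'⟩ h
    obtain ⟨hv, rfl⟩ := Prod.mk.inj (arc_injective hn (a₁ := (_, d)) (a₂ := (_, d')) h)
    obtain ⟨rfl, rfl⟩ := Prod.mk.inj (finProdFinEquiv.injective (Fin.castLE_injective hmL hv))
    rfl

theorem circDist_blockArc (hn : 2 * N < n) {m L : ℕ} (hmL : m * L ≤ n) (j : Fin m)
    (r : Fin L × Fin N) : circDist (blockArc hn hmL (j, r)) = r.2 + 1 :=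
  circDist_arc hn _ _

theorem infix_code_of_forall_blockArc (hn : 2 * N < n) {m : ℕ} {z : List (Fin N → Bool)}
    (hm : m * z.length ≤ n) {ω : Sample n} {j : Fin m}
    (h : ∀ r : Fin z.length × Fin N, ω (blockArc hn hm (j, r)) = z.get r.1 r.2) :
    z <:+: code N ω := by
  refine List.infix_iff_getElem?.2 ⟨z.length * j, ?_, fun i hi => ?_⟩
  · rw [length_code]
    calc z.length + z.length * j
      _ = (j + 1) * z.length := by ring
      _ ≤ m * z.length := by gcongr; omega
      _ ≤ n := hm
  · have h_letter := getElem?_code hn ω (Fin.castLE hm (finProdFinEquiv (j, ⟨i, hi⟩)))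
    exact h_letter.trans (congrArg some (funext fun d => h (⟨i, hi⟩, d)))

theorem cPr_not_infix_code_le (hp : ∀ i, 0 ≤ p i ∧ p i ≤ 1) (hn : 2 * N < n)
    (z : List (Fin N → Bool)) {m : ℕ} (hm : m * z.length ≤ n) :
    cPr p n (fun ω => ¬ z <:+: code N ω) ≤
      (1 - ∏ r : Fin z.length × Fin N, edgeWeight p (r.2 + 1) (z.get r.1 r.2)) ^ m := by
  calc cPr p n (fun ω => ¬ z <:+: code N ω)
    _ ≤ cPr p n fun ω => ∀ j, ¬ ∀ r, ω (blockArc hn hm (j, r)) = z.get r.1 r.2 :=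
      cPr_mono hp fun ω _ h_not j hj => h_not (infix_code_of_forall_blockArc hn hm hj)
    _ = ∏ j, (1 - ∏ r, edgeWeight p (circDist (blockArc hn hm (j, r))) (z.get r.1 r.2)) := by
      rw [← sum_prod_of_avoids fun e => sum_edgeWeight p (circDist e)]
      simp only [cPr, cWeight_eq_prod]
      congr!
    _ = _ := by simp only [circDist_blockArc, Finset.prod_const, Finset.card_univ, Fintype.card_fin]

theorem tendsto_cPr_not_infix_code (hp : ∀ i, 0 ≤ p i ∧ p i ≤ 1) {z : List (Fin N → Bool)}
    (hz : ∀ a ∈ z, ∀ d : Fin N, edgeWeight p (d + 1) (a d) ≠ 0) :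
    Tendsto (fun n => cPr p n fun ω => ¬ z <:+: code N ω) atTop (nhds 0) := by
  let q : ℝ := ∏ r : Fin z.length × Fin N, edgeWeight p (r.2 + 1) (z.get r.1 r.2)
  have hq_pos : 0 < q := Finset.prod_pos fun r _ =>
    (edgeWeight_nonneg hp _ _).lt_of_ne' (hz _ (z.get_mem r.1) r.2)
  have hq_le : q ≤ 1 := Finset.prod_le_one (fun _ _ => edgeWeight_nonneg hp _ _)
    fun _ _ => edgeWeight_le_one hp _ _
  have h_geometric : Tendsto (fun n => (1 - q) ^ (n / (z.length + 1))) atTop (nhds 0) :=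
    (tendsto_pow_atTop_nhds_zero_of_lt_one (by linarith) (by linarith)).comp
      (Nat.tendsto_div_const_atTop (by omega))
  refine squeeze_zero' (.of_forall fun n => cPr_nonneg hp _) ?_ h_geometric
  filter_upwards [eventually_gt_atTop (2 * N)] with n hn
  refine cPr_not_infix_code_le hp hn z ?_
  calc n / (z.length + 1) * z.length
    _ ≤ n / (z.length + 1) * (z.length + 1) := by gcongr; omega
    _ ≤ n := Nat.div_mul_le_self _ _

end Arc

/-- If `p̄` (with `0 ≤ p i ≤ 1`) has only finitely many non-zero terms,
then for every sentence `ψ` of the language `L≤^c` the probability that `C(n, p̄)` satisfies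
`ψ` tends to `0` or to `1`. -/
theorem statement_12 (p : ℕ → ℝ) (hp : ∀ i, 0 ≤ p i ∧ p i ≤ 1)
    (hfin : {i : ℕ | p i ≠ 0}.Finite) (ψ : Lcyc.Sentence) :
    Tendsto (fun n => cProbCyc p n ψ) atTop (nhds 0) ∨
      Tendsto (fun n => cProbCyc p n ψ) atTop (nhds 1) := by
  obtain ⟨N, h_bound⟩ := hfin.bddAbove
  have hN (i : ℕ) (hi : N < i) : p i = 0 := by
    by_contra h_ne
    exact (h_bound h_ne).not_gt hi
  obtain ⟨z, hz_good, hz⟩ := exists_deciding_word_of_forall_mem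
    (fun a => ∀ d : Fin N, edgeWeight p (d + 1) (a d) ≠ 0) ψ
  refine tendsto_cPr_zero_or_one_of_decides hp (c := SatWord z ψ)
    (tendsto_cPr_not_infix_code hp hz_good) ?_
  filter_upwards [eventually_gt_atTop (2 * N)] with n hn ω hω h_infix
  rw [← satWord_code_iff hN hω]
  exact hz _ (fun a ha => edgeWeight_ne_zero_of_mem_code hn hω ha) h_infix

end RandomGraph
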